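/- arXiv:1511.09189 — 2 statements merged into one kernel-verified Lean document; each statement's English description precedes it below -/
import Mathlib

section
/- Let x be an n×n positive definite complex matrix and h an arbitrary n×n complex matrix. Then Tr( h* · D log(x) h ) = ∫₀¹ Tr( h* · (λ L_x + (1−λ) R_x)⁻¹ h ) dλ, where L_x and R_x denote left and right multiplication by x on the space of n×n matrices, (λ L_x + (1−λ) R_x)⁻¹ is the inverse of this positive definite linear operator on matrices (for λ ∈ [0,1]), and D log(x) is the Fréchet differential at x of the matrix logarithm. -/
open Matrix
open scoped ComplexOrder

attribute [local instance] Matrix.normedAddCommGroup Matrix.normedSpace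

/-- The matrix function induced by `f : ℝ → ℝ` via the functional calculus
(defined to be `0` on non-Hermitian matrices). -/
noncomputable def matFun {m : Type*} [Fintype m] [DecidableEq m] (f : ℝ → ℝ)
    (x : Matrix m m ℂ) : Matrix m m ℂ :=
  if hx : x.IsHermitian then
    (hx.eigenvectorUnitary : Matrix m m ℂ) *
      Matrix.diagonal (fun i => (f (hx.eigenvalues i) : ℂ)) *
      star (hx.eigenvectorUnitary : Matrix m m ℂ)
  else 0

/-- `D` is the (complex-linear extension of the) Fréchet differential at `x` of the matrix
function induced by `f`, the differential being taken within the real subspace of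
Hermitian matrices. -/
noncomputable def IsFDerivMatFun {m : Type*} [Fintype m] [DecidableEq m] (f : ℝ → ℝ)
    (x : Matrix m m ℂ) (D : Matrix m m ℂ →L[ℂ] Matrix m m ℂ) : Prop :=
  HasFDerivWithinAt (matFun f) (D.restrictScalars ℝ) {y : Matrix m m ℂ | y.IsHermitian} x

/-- `f : (0,∞) → ℝ` (given together with its derivative `f'`) is a matrix entropy:
it is twice continuously differentiable and for every `n` the map
`(x, h) ↦ Tr (h* ⬝ (Df' x) h)` is jointly convex in pairs `(x, h)` of an `n × n`
positive definite matrix `x` and an arbitrary `n × n` matrix `h`. -/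
noncomputable def IsMatrixEntropy (f f' : ℝ → ℝ) : Prop :=
  ContDiffOn ℝ 2 f (Set.Ioi 0) ∧
  (∀ t ∈ Set.Ioi (0 : ℝ), HasDerivAt f (f' t) t) ∧
  ∀ (n : ℕ)
    (D : Matrix (Fin n) (Fin n) ℂ → (Matrix (Fin n) (Fin n) ℂ →L[ℂ] Matrix (Fin n) (Fin n) ℂ)),
    (∀ x : Matrix (Fin n) (Fin n) ℂ, x.PosDef → IsFDerivMatFun f' x (D x)) →
    ConvexOn ℝ {q : Matrix (Fin n) (Fin n) ℂ × Matrix (Fin n) (Fin n) ℂ | q.1.PosDef}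
      (fun q => (Matrix.trace (q.2ᴴ * (D q.1) q.2)).re)

/-- The partial trace over the second tensor factor. -/
noncomputable def ptrace {ι₁ ι₂ : Type*} [Fintype ι₂]
    (ρ : Matrix (ι₁ × ι₂) (ι₁ × ι₂) ℂ) : Matrix ι₁ ι₁ ℂ :=
  Matrix.of fun i j => ∑ k : ι₂, ρ (i, k) (j, k)

/-! Both sides are additive in `h`, and every matrix is a sum of joint eigenvectors of `L_x` and
`R_x`, namely multiples of the matrix units in an eigenbasis of `x`. If `x * h = a • h` and
`h * x = b • h`, then `(λ L_x + (1 - λ) R_x)⁻¹ h = (λ a + (1 - λ) b)⁻¹ • h`, whose integral over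
`[0, 1]` is the divided difference `(log b - log a) / (b - a)` times `h` (or `a⁻¹ • h` if `a = b`).
The differential `D = D log(x)` acts on `h` by the same scalar. If `a ≠ b`, then `h` is a multiple
of the commutator `⁅h, x⁆`, and differentiating `log (e^{tk} x e^{-tk}) = e^{tk} (log x) e^{-tk}` at
`t = 0` gives `D ⁅k, x⁆ = ⁅k, log x⁆`. If `a = b`, then `h` commutes with `x`, and differentiating
`log (x e^{tk}) = log x + t k` gives `D (x k) = k`. -/

/-- `h` is a joint eigenvector of left and right multiplication by `x`, with eigenvalues `a` and
`b` respectively. Such `h` diagonalize every operator built from `L_x` and `R_x`. As for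
`Module.End.eigenspace`, `h = 0` is allowed. -/
structure IsJointEigenvector {R A : Type*} [Mul A] [SMul R A] (x : A) (a b : R) (h : A) :
    Prop where
  mul_left : x * h = a • h
  mul_right : h * x = b • h

/-- The operator `t L_x + (1 - t) R_x` interpolating between right multiplication (`t = 0`) and
left multiplication (`t = 1`) by `x`, whose inverses are integrated in the formula for `D log(x)`.
The parameter `t` is real and the operator is complex linear. -/
noncomputable def mulInterpolation {A : Type*} [Ring A] [Algebra ℂ A] (x : A) (t : ℝ) :
    Module.End ℂ A :=
  (t : ℂ) • LinearMap.mulLeft ℂ x + ((1 : ℂ) - (t : ℂ)) • LinearMap.mulRight ℂ x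

theorem IsJointEigenvector.commute {R A : Type*} [Mul A] [SMul R A] {x h : A} {a : R}
    (hh : IsJointEigenvector x a a h) : Commute x h :=
  hh.mul_left.trans hh.mul_right.symm

theorem IsJointEigenvector.lie_eq_smul {R A : Type*} [Ring R] [NonUnitalRing A] [Module R A]
    {x h : A} {a b : R} (hh : IsJointEigenvector x a b h) : ⁅h, x⁆ = (b - a) • h := by
  rw [Ring.lie_def, hh.mul_left, hh.mul_right, sub_smul]

theorem IsJointEigenvector.map {F R A B : Type*} [Mul A] [Mul B] [SMul R A] [SMul R B]
    [FunLike F A B] [MulHomClass F A B] [MulActionHomClass F R A B] {x h : A} {a b : R} (φ : F)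
    (hh : IsJointEigenvector x a b h) : IsJointEigenvector (φ x) a b (φ h) where
  mul_left := by rw [← map_mul, hh.mul_left, map_smul]
  mul_right := by rw [← map_mul, hh.mul_right, map_smul]

section FunctionalCalculus

variable {A : Type*} [Ring A] [StarRing A] [TopologicalSpace A] [Algebra ℝ A]
  [ContinuousFunctionalCalculus ℝ A IsSelfAdjoint] {x h : A} {f : ℝ → ℝ} {a b : ℝ}

theorem exists_commute_cfc_sub_algebraMap_eq_mul (hx : IsSelfAdjoint x)
    (hf : ContinuousOn f (spectrum ℝ x)) (ha : DifferentiableAt ℝ f a) :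
    ∃ q : A, Commute q (x - algebraMap ℝ A a) ∧
      cfc f x - algebraMap ℝ A (f a) = q * (x - algebraMap ℝ A a) := by
  have hq : ContinuousOn (dslope f a) (spectrum ℝ x) := fun s hs ↦ by
    rcases eq_or_ne s a with rfl | hsa
    · exact (continuousAt_dslope_same.2 ha).continuousWithinAt
    · exact (continuousWithinAt_dslope_of_ne hsa).2 (hf s hs)
  have hlin : cfc (fun s ↦ s - a) x = x - algebraMap ℝ A a := by
    rw [cfc_sub _ _ x, cfc_id' ℝ x, cfc_const a x]
  refine ⟨cfc (dslope f a) x, hlin ▸ cfc_commute_cfc _ _ x, ?_⟩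
  rw [← hlin, ← cfc_mul _ _ x, ← cfc_const (f a) x, ← cfc_sub _ _ x]
  exact cfc_congr fun s _ ↦ by simp only [← sub_smul_dslope f a s, smul_eq_mul, mul_comm]

theorem IsJointEigenvector.cfc (hh : IsJointEigenvector x a b h) (hx : IsSelfAdjoint x)
    (hf : ContinuousOn f (spectrum ℝ x)) (ha : DifferentiableAt ℝ f a)
    (hb : DifferentiableAt ℝ f b) : IsJointEigenvector (cfc f x) (f a) (f b) h := by
  obtain ⟨p, -, hp⟩ := exists_commute_cfc_sub_algebraMap_eq_mul hx hf ha
  obtain ⟨q, hqx, hq⟩ := exists_commute_cfc_sub_algebraMap_eq_mul hx hf hb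
  constructor
  · rw [← sub_eq_zero, Algebra.smul_def, ← sub_mul, hp, mul_assoc, sub_mul, hh.mul_left,
      ← Algebra.smul_def, sub_self, mul_zero]
  · rw [← sub_eq_zero, Algebra.smul_def, Algebra.commutes, ← mul_sub, hq, hqx.eq, ← mul_assoc,
      mul_sub, hh.mul_right, ← Algebra.commutes, ← Algebra.smul_def, sub_self, zero_mul]

end FunctionalCalculus

section Exponential

open NormedSpace

variable {A : Type*} [NormedRing A] [NormedAlgebra ℝ A] [CompleteSpace A]

theorem hasDerivAt_exp_smul_zero (k : A) : HasDerivAt (fun t : ℝ ↦ exp (t • k)) k 0 := by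
  simpa using hasDerivAt_exp_smul_const (𝕂 := ℝ) k 0

theorem hasDerivAt_exp_smul_conj (k y : A) :
    HasDerivAt (fun t : ℝ ↦ exp (t • k) * y * exp (t • -k)) ⁅k, y⁆ 0 := by
  refine (((hasDerivAt_exp_smul_zero k).mul_const y).mul
    (hasDerivAt_exp_smul_zero (-k))).congr_deriv ?_
  simp [Ring.lie_def, sub_eq_add_neg]

end Exponential

section Derivative

open NormedSpace
open scoped ComplexStarModule

variable {A : Type*} [CStarAlgebra A] {x : A} {D : A →L[ℂ] A}

theorem cfc_exp_conj_of_mem_skewAdjoint {f : ℝ → ℝ} {k : A} (hx : IsSelfAdjoint x)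
    (hf : ContinuousOn f (spectrum ℝ x)) (hk : k ∈ skewAdjoint A) :
    cfc f (exp k * x * exp (-k)) = exp k * cfc f x * exp (-k) := by
  let +nondep : NormedAlgebra ℚ A := .restrictScalars ℚ ℂ A
  have hstar : star (exp k) = exp (-k) := by rw [star_exp, skewAdjoint.mem_iff.1 hk]
  let φ : A →⋆ₐ[ℝ] A := Unitary.conjStarAlgAut ℝ A ⟨exp k, exp_mem_unitary_of_mem_skewAdjoint hk⟩
  have hφ (y : A) : φ y = exp k * y * exp (-k) := by rw [← hstar]; rfl
  have hcont : Continuous φ := by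
    simp only [funext hφ]
    fun_prop
  rw [← hφ, ← hφ, φ.map_cfc f x hf hcont hx (hx.map φ)]

theorem fderiv_cfc_lie_of_mem_skewAdjoint {f : ℝ → ℝ} {k : A} (hx : IsSelfAdjoint x)
    (hf : ContinuousOn f (spectrum ℝ x))
    (hD : HasFDerivWithinAt (cfc f) (D.restrictScalars ℝ) {y | IsSelfAdjoint y} x)
    (hk : k ∈ skewAdjoint A) : D ⁅k, x⁆ = ⁅k, cfc f x⁆ := by
  let +nondep : NormedAlgebra ℚ A := .restrictScalars ℚ ℂ A
  have hsa (t : ℝ) : IsSelfAdjoint (exp (t • k) * x * exp (t • -k)) := by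
    have hconj := hx.conjugate (exp (t • k))
    rwa [star_exp, star_smul, skewAdjoint.mem_iff.1 hk, star_trivial] at hconj
  have hcomp := hD.comp_hasDerivAt_of_eq 0 (hasDerivAt_exp_smul_conj k x)
    (.of_forall hsa) (by simp)
  refine hcomp.unique ((hasDerivAt_exp_smul_conj k (cfc f x)).congr_of_eventuallyEq
    (.of_forall fun t ↦ ?_))
  simpa using cfc_exp_conj_of_mem_skewAdjoint hx hf (skewAdjoint.smul_mem t hk)

theorem fderiv_cfc_lie {f : ℝ → ℝ} (hx : IsSelfAdjoint x) (hf : ContinuousOn f (spectrum ℝ x))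
    (hD : HasFDerivWithinAt (cfc f) (D.restrictScalars ℝ) {y | IsSelfAdjoint y} x) (k : A) :
    D ⁅k, x⁆ = ⁅k, cfc f x⁆ := by
  have hsa {s : A} (hs : IsSelfAdjoint s) : D ⁅s, x⁆ = ⁅s, cfc f x⁆ := by
    have hI := fderiv_cfc_lie_of_mem_skewAdjoint hx hf hD
      (hs.smul_mem_skewAdjoint Complex.conj_I)
    simp only [Ring.lie_def, smul_mul_assoc, mul_smul_comm, ← smul_sub, map_smul] at hI ⊢
    exact smul_right_injective A Complex.I_ne_zero hI
  have hre := hsa (ℜ k).2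
  have him := hsa (ℑ k).2
  rw [← realPart_add_I_smul_imaginaryPart k]
  simp only [Ring.lie_def, map_sub, add_mul, mul_add, smul_mul_assoc, mul_smul_comm, map_add,
    map_smul] at hre him ⊢
  linear_combination (norm := module) hre + Complex.I • him

variable [PartialOrder A] [StarOrderedRing A]

theorem exp_log_add_of_commute {k : A} (hx : IsStrictlyPositive x) (hxk : Commute x k) :
    exp (CFC.log x + k) = x * exp k := by
  let +nondep : NormedAlgebra ℚ A := .restrictScalars ℚ ℂ A
  have hlog : Commute (CFC.log x) k := hx.isSelfAdjoint.commute_cfc hxk Real.log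
  rw [exp_add_of_commute hlog, CFC.exp_log x]

theorem fderiv_log_mul_of_commute_of_isSelfAdjoint {k : A} (hx : IsStrictlyPositive x)
    (hD : HasFDerivWithinAt CFC.log (D.restrictScalars ℝ) {y | IsSelfAdjoint y} x)
    (hk : IsSelfAdjoint k) (hxk : Commute x k) : D (x * k) = k := by
  have hsa (t : ℝ) : IsSelfAdjoint (CFC.log x + t • k) := .add .log (.smul (.all t) hk)
  have hexp (t : ℝ) := exp_log_add_of_commute hx (hxk.smul_right t)
  have hcomp := hD.comp_hasDerivAt_of_eq 0 ((hasDerivAt_exp_smul_zero k).const_mul x)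
    (.of_forall fun t ↦ by simpa only [Set.mem_ofPred_eq, ← hexp t] using (hsa t).exp) (by simp)
  have hlin : HasDerivAt (fun t : ℝ ↦ CFC.log x + t • k) k 0 := by
    simpa using ((hasDerivAt_id (0 : ℝ)).smul_const k).const_add (CFC.log x)
  refine hcomp.unique (hlin.congr_of_eventuallyEq (.of_forall fun t ↦ ?_))
  simp only [Function.comp_apply, ← hexp t, CFC.log_exp _ (hsa t)]

theorem fderiv_log_mul_of_commute {k : A} (hx : IsStrictlyPositive x)
    (hD : HasFDerivWithinAt CFC.log (D.restrictScalars ℝ) {y | IsSelfAdjoint y} x)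
    (hxk : Commute x k) : D (x * k) = k := by
  have hxk' : Commute x (star k) := by simpa [hx.isSelfAdjoint.star_eq] using hxk.star_star
  have hre : Commute x (ℜ k) := by
    rw [realPart_apply_coe]
    exact (hxk.add_right hxk').smul_right _
  have him : Commute x (ℑ k) := by
    rw [imaginaryPart_apply_coe]
    exact ((hxk.sub_right hxk').smul_right _).smul_right _
  rw [← realPart_add_I_smul_imaginaryPart k, mul_add, mul_smul_comm, map_add, map_smul,
    fderiv_log_mul_of_commute_of_isSelfAdjoint hx hD (ℜ k).2 hre,
    fderiv_log_mul_of_commute_of_isSelfAdjoint hx hD (ℑ k).2 him]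

theorem IsJointEigenvector.fderiv_log_apply {h : A} {a b : ℝ} (hh : IsJointEigenvector x a b h)
    (hx : IsStrictlyPositive x) (ha : 0 < a) (hb : 0 < b)
    (hD : HasFDerivWithinAt CFC.log (D.restrictScalars ℝ) {y | IsSelfAdjoint y} x) :
    D h = dslope Real.log a b • h := by
  rcases eq_or_ne b a with rfl | hab
  · have hD_comm := fderiv_log_mul_of_commute hx hD hh.commute
    rw [hh.mul_left, D.map_smul_of_tower] at hD_comm
    rw [dslope_same, Real.deriv_log, eq_inv_smul_iff₀ ha.ne', hD_comm]
  · have hlog : ContinuousOn Real.log (spectrum ℝ x) :=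
      Real.continuousOn_log.mono fun s hs ↦ (hx.spectrum_pos hs).ne'
    have hh_log := hh.cfc hx.isSelfAdjoint hlog (Real.differentiableAt_log ha.ne')
      (Real.differentiableAt_log hb.ne')
    have hD_lie := fderiv_cfc_lie hx.isSelfAdjoint hlog hD h
    rw [hh.lie_eq_smul, hh_log.lie_eq_smul, D.map_smul_of_tower, ← sub_smul_dslope, smul_assoc]
      at hD_lie
    exact smul_right_injective A (sub_ne_zero.2 hab) hD_lie

end Derivative

section InterpolatedMultiplication

variable {A : Type*} [Ring A] [Algebra ℂ A] {x h : A} {a b t : ℝ}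

theorem IsJointEigenvector.mulInterpolation_apply (hh : IsJointEigenvector x a b h) :
    mulInterpolation x t h = (t * a + (1 - t) * b) • h := by
  simp only [mulInterpolation, LinearMap.add_apply, LinearMap.smul_apply, LinearMap.mulLeft_apply,
    LinearMap.mulRight_apply, hh.mul_left, hh.mul_right, ← Complex.coe_smul, smul_smul, ← add_smul]
  push_cast
  rfl

theorem IsJointEigenvector.inverse_mulInterpolation_apply (hh : IsJointEigenvector x a b h)
    (hunit : IsUnit (mulInterpolation x t)) (hc : t * a + (1 - t) * b ≠ 0) :
    Ring.inverse (mulInterpolation x t) h = (t * a + (1 - t) * b)⁻¹ • h := by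
  rw [eq_inv_smul_iff₀ hc, ← LinearMap.map_smul_of_tower, ← hh.mulInterpolation_apply,
    ← Module.End.mul_apply, Ring.inverse_mul_cancel _ hunit, Module.End.one_apply]

end InterpolatedMultiplication

section ConvexCombination

theorem convexCombination_pos {R : Type*} [Ring R] [LinearOrder R] [IsStrictOrderedRing R]
    {a b t : R} (ha : 0 < a) (hb : 0 < b) (ht : t ∈ Set.Icc (0 : R) 1) :
    0 < t * a + (1 - t) * b :=
  convex_Ioi (0 : R) ha hb ht.1 (sub_nonneg.2 ht.2) (add_sub_cancel t 1)

variable {a b : ℝ}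

theorem continuousOn_inv_convexCombination (ha : 0 < a) (hb : 0 < b) :
    ContinuousOn (fun t : ℝ ↦ (t * a + (1 - t) * b)⁻¹) (Set.Icc 0 1) :=
  (by fun_prop : Continuous _).continuousOn.inv₀
    fun _ ht ↦ (convexCombination_pos ha hb ht).ne'

theorem integral_inv_convexCombination (ha : 0 < a) (hb : 0 < b) :
    ∫ t in (0 : ℝ)..1, (t * a + (1 - t) * b)⁻¹ = dslope Real.log a b := by
  rcases eq_or_ne b a with rfl | hab
  · simp [← add_mul]
  have hseg (t : ℝ) : b + t • (a - b) = t * a + (1 - t) * b := by rw [smul_eq_mul]; ring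
  have hFTC : (a - b) • ∫ t in (0 : ℝ)..1, (b + t • (a - b))⁻¹ =
      Real.log (b + (a - b)) - Real.log b := by
    refine intervalIntegral.integral_unitInterval_deriv_eq_sub (f' := (·⁻¹)) ?_ fun t ht ↦ ?_
    · simpa only [hseg] using continuousOn_inv_convexCombination ha hb
    · exact Real.hasDerivAt_log (hseg t ▸ (convexCombination_pos ha hb ht).ne')
  refine smul_right_injective ℝ (sub_ne_zero.2 hab) ?_
  simp only [hseg, add_sub_cancel] at hFTC
  simp only [sub_smul_dslope]
  rw [← neg_sub a, neg_smul, hFTC, neg_sub]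

end ConvexCombination

section Matrix

variable {m : Type*} [Fintype m] [DecidableEq m] {x : Matrix m m ℂ}

theorem matFun_eq_cfc (f : ℝ → ℝ) : matFun f = cfc (A := Matrix m m ℂ) f := by
  funext y
  by_cases hy : y.IsHermitian
  · rw [matFun, dif_pos hy, hy.cfc_eq]
    rfl
  · rw [matFun, dif_neg hy]
    exact (cfc_apply_of_not_predicate y hy).symm

open scoped Matrix.Norms.L2Operator MatrixOrder in
theorem IsFDerivMatFun.log_apply_of_isJointEigenvector {D : Matrix m m ℂ →L[ℂ] Matrix m m ℂ}
    {h : Matrix m m ℂ} {a b : ℝ} (hD : IsFDerivMatFun Real.log x D) (hx : x.PosDef)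
    (ha : 0 < a) (hb : 0 < b) (hh : IsJointEigenvector x a b h) :
    D h = dslope Real.log a b • h := by
  rw [IsFDerivMatFun, matFun_eq_cfc] at hD
  -- `hD` refers to the sup norm, but a derivative depends only on the topology, which the C⋆-norm
  -- shares definitionally.
  exact hh.fderiv_log_apply hx.isStrictlyPositive ha hb hD

theorem isJointEigenvector_diagonal_single {R S : Type*} [CommSemiring R] [Semiring S]
    [Algebra R S] (d : m → R) (i j : m) (c : S) :
    IsJointEigenvector (diagonal fun l ↦ algebraMap R S (d l)) (d i) (d j) (single i j c) where
  mul_left := by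
    ext k l
    rw [diagonal_mul, smul_single, single_apply, single_apply, Algebra.smul_def]
    split_ifs with h
    · rw [h.1]
    · rw [mul_zero]
  mul_right := by
    ext k l
    rw [mul_diagonal, smul_single, single_apply, single_apply, Algebra.smul_def, Algebra.commutes]
    split_ifs with h
    · rw [h.2]
    · rw [zero_mul]

theorem isJointEigenvector_induction (hx : x.IsHermitian) {p : Matrix m m ℂ → Prop} (zero : p 0)
    (add : ∀ h k, p h → p k → p (h + k))
    (eigenvector : ∀ i j h,
      IsJointEigenvector x (hx.eigenvalues i) (hx.eigenvalues j) h → p h)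
    (h : Matrix m m ℂ) : p h := by
  let φ := Unitary.conjStarAlgAut ℝ (Matrix m m ℂ) hx.eigenvectorUnitary
  have hφ : φ (diagonal fun l ↦ algebraMap ℝ ℂ (hx.eigenvalues l)) = x := hx.spectral_theorem.symm
  rw [← φ.apply_symm_apply h]
  induction φ.symm h using Matrix.induction_on' with
  | h_zero => rwa [map_zero]
  | h_add h k hh hk => simpa only [map_add] using add _ _ hh hk
  | h_std_basis i j c =>
    have hφ_eigen := (isJointEigenvector_diagonal_single hx.eigenvalues i j c).map φ
    rw [hφ] at hφ_eigen
    exact eigenvector i j _ hφ_eigen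

theorem isUnit_mulInterpolation (hx : x.PosDef) {t : ℝ} (ht : t ∈ Set.Icc (0 : ℝ) 1) :
    IsUnit (mulInterpolation x t) := by
  have hsurj : Function.Surjective (mulInterpolation x t) := by
    rw [← LinearMap.range_eq_top, Submodule.eq_top_iff']
    refine isJointEigenvector_induction hx.isHermitian (zero_mem _) (fun _ _ ↦ add_mem)
      fun i j h hh ↦ ?_
    have hc := convexCombination_pos (hx.eigenvalues_pos i) (hx.eigenvalues_pos j) ht
    refine ⟨(t * hx.isHermitian.eigenvalues i +
      (1 - t) * hx.isHermitian.eigenvalues j)⁻¹ • h, ?_⟩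
    rw [LinearMap.map_smul_of_tower, hh.mulInterpolation_apply, inv_smul_smul₀ hc.ne']
  exact (Module.End.isUnit_iff _).2 ⟨LinearMap.injective_iff_surjective.2 hsurj, hsurj⟩

variable {E : Type*} [NormedAddCommGroup E] [NormedSpace ℝ E]

theorem IsJointEigenvector.eqOn_map_inverse_mulInterpolation {h : Matrix m m ℂ} {a b : ℝ}
    (hh : IsJointEigenvector x a b h) (hx : x.PosDef) (ha : 0 < a) (hb : 0 < b)
    (φ : Matrix m m ℂ →ₗ[ℝ] E) :
    Set.EqOn (fun t ↦ φ (Ring.inverse (mulInterpolation x t) h))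
      (fun t ↦ (t * a + (1 - t) * b)⁻¹ • φ h) (Set.Icc 0 1) := fun t ht ↦ by
  beta_reduce
  rw [hh.inverse_mulInterpolation_apply (isUnit_mulInterpolation hx ht)
    (convexCombination_pos ha hb ht).ne', map_smul]

theorem continuousOn_map_inverse_mulInterpolation (hx : x.PosDef) (φ : Matrix m m ℂ →ₗ[ℝ] E)
    (h : Matrix m m ℂ) :
    ContinuousOn (fun t ↦ φ (Ring.inverse (mulInterpolation x t) h)) (Set.Icc 0 1) := by
  induction h using isJointEigenvector_induction hx.isHermitian with
  | zero => simpa only [map_zero] using continuousOn_const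
  | add h k hh hk => simpa only [map_add] using hh.fun_add hk
  | eigenvector i j h hh =>
    have hi := hx.eigenvalues_pos i
    have hj := hx.eigenvalues_pos j
    exact ((continuousOn_inv_convexCombination hi hj).smul continuousOn_const).congr
      (hh.eqOn_map_inverse_mulInterpolation hx hi hj φ)

theorem trace_fderiv_log_eq_integral_general [CompleteSpace E] (hx : x.PosDef)
    {Dlog : Matrix m m ℂ →L[ℂ] Matrix m m ℂ} (hD : IsFDerivMatFun Real.log x Dlog)
    (φ : Matrix m m ℂ →ₗ[ℝ] E) (h : Matrix m m ℂ) :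
    φ (Dlog h) = ∫ t in (0 : ℝ)..1, φ (Ring.inverse (mulInterpolation x t) h) := by
  induction h using isJointEigenvector_induction hx.isHermitian with
  | zero => simp
  | add h k hh hk =>
    have hint (y : Matrix m m ℂ) :
        IntervalIntegrable (fun t ↦ φ (Ring.inverse (mulInterpolation x t) y))
          MeasureTheory.volume 0 1 :=
      (continuousOn_map_inverse_mulInterpolation hx φ y).intervalIntegrable_of_Icc zero_le_one
    simp only [map_add, hh, hk, ← intervalIntegral.integral_add (hint h) (hint k)]
  | eigenvector i j h hh =>
    have hi := hx.eigenvalues_pos i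
    have hj := hx.eigenvalues_pos j
    rw [hD.log_apply_of_isJointEigenvector hx hi hj hh, map_smul,
      ← integral_inv_convexCombination hi hj, ← intervalIntegral.integral_smul_const]
    refine (intervalIntegral.integral_congr ?_).symm
    rw [Set.uIcc_of_le zero_le_one]
    exact hh.eqOn_map_inverse_mulInterpolation hx hi hj φ

end Matrix

/-- For positive definite `x` and arbitrary `h`,
`Tr (h* ⬝ D log(x) h) = ∫₀¹ Tr (h* ⬝ (λ Lₓ + (1−λ) Rₓ)⁻¹ h) dλ`, where `Lₓ` and `Rₓ` are left and
right multiplication by `x` and `D log(x)` is the Fréchet differential of the matrix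
logarithm at `x`. -/
theorem trace_fderiv_log_eq_integral {n : ℕ}
    (x : Matrix (Fin n) (Fin n) ℂ) (hx : x.PosDef)
    (h : Matrix (Fin n) (Fin n) ℂ)
    (Dlog : Matrix (Fin n) (Fin n) ℂ →L[ℂ] Matrix (Fin n) (Fin n) ℂ)
    (hD : IsFDerivMatFun Real.log x Dlog) :
    (Matrix.trace (hᴴ * Dlog h)).re
      = ∫ lam in (0 : ℝ)..1,
          (Matrix.trace (hᴴ *
            (Ring.inverse ((lam : ℂ) • LinearMap.mulLeft ℂ x
              + ((1 : ℂ) - (lam : ℂ)) • LinearMap.mulRight ℂ x) h))).re :=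
  trace_fderiv_log_eq_integral_general hx hD
    (Complex.reLm ∘ₗ (traceLinearMap (Fin n) ℂ ℂ ∘ₗ LinearMap.mulLeft ℂ hᴴ).restrictScalars ℝ) h
end

section
/- Let H₁ and H₂ be finite-dimensional complex Hilbert spaces, H = H₁ ⊗ H₂, d₂ = dim H₂, and let f : (0,∞) → ℝ be twice continuously differentiable. Define G(ρ) = d₂⁻¹ · Tr₁₂ f(d₂ρ) − Tr₁ f(ρ₁) on positive definite operators ρ on H, where ρ₁ = Tr₂ ρ. Then G is twice Fréchet differentiable and its second Fréchet differential satisfies d²G(ρ)(h,h) = d₂ · Tr₁₂( h · Df'(d₂ρ) h ) − Tr₁( h₁ · Df'(ρ₁) h₁ ) for every positive definite ρ on H and every self-adjoint h on H, where h₁ = Tr₂ h. -/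
open Matrix
open scoped ComplexOrder

attribute [local instance] Matrix.normedAddCommGroup Matrix.normedSpace

/-!
Write `P c` for the spectral projection of `x` at an eigenvalue `c`. Since `∑ c, P c = 1` and
`P c * x = c • P c`, the equality `f t - f c = (t - c) * dslope f c t` on the spectrum of `y` gives
`f y - f x = ∑ c, P c * (y - x) * (dslope f c) y`. The functional calculus is continuous, so
replacing `y` by `x` in the last factor costs only `o(y - x)`, and this is the differential:
`Df(x) h = ∑ c, P c * h * (dslope f c) x`. As `(dslope f c) x * P c = f' c • P c`, cyclicity of the
trace gives `Tr (Df(x) h) = Tr (f'(x) h)`. Hence for linear `L` the function `y ↦ Tr f(L y)` has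
differential `h ↦ Tr (f'(L x) * L h)` at `x`, and differentiating once more gives the form
`(k, h) ↦ Tr (Df'(L x) (L k) * L h)`. Both terms of `G` are of this kind, with `L` multiplication
by `d₂` and the partial trace.
-/

open Filter Topology

section FunctionalCalculus

variable {𝕜 A : Type*} {p : A → Prop} [RCLike 𝕜] [Ring A] [StarRing A] [TopologicalSpace A]
  [Algebra 𝕜 A] [ContinuousFunctionalCalculus 𝕜 A p]

open scoped Classical in
/-- The spectral projection of `x` at the point `c`, nonzero only when `c` is an isolated point of
the spectrum. It is meant for `x` with finite spectrum, where every function is continuous on the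
spectrum and hence admissible in `cfc`. -/
noncomputable def spectralProj (x : A) (c : 𝕜) : A :=
  cfc (Pi.single c 1) x

theorem spectralProj_mul_cfc {x : A} (hx : (spectrum 𝕜 x).Finite) (g : 𝕜 → 𝕜) (c : 𝕜) :
    spectralProj x c * cfc g x = g c • spectralProj x c := by
  classical
  rw [spectralProj, ← cfc_mul _ _ x (hx.continuousOn _) (hx.continuousOn _),
    ← cfc_const_mul _ _ x (hx.continuousOn _)]
  congr! 2 with t
  obtain rfl | ht := eq_or_ne t c <;> simp [*]

theorem cfc_mul_spectralProj {x : A} (hx : (spectrum 𝕜 x).Finite) (g : 𝕜 → 𝕜) (c : 𝕜) :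
    cfc g x * spectralProj x c = g c • spectralProj x c :=
  (cfc_commute_cfc _ _ x).eq.trans (spectralProj_mul_cfc hx g c)

theorem spectralProj_mul_self {x : A} (hpx : p x) (hx : (spectrum 𝕜 x).Finite) (c : 𝕜) :
    spectralProj x c * x = c • spectralProj x c := by
  simpa only [cfc_id 𝕜 x hpx] using! spectralProj_mul_cfc hx id c

theorem cfc_eq_sum_smul_spectralProj {x : A} (hx : (spectrum 𝕜 x).Finite) (g : 𝕜 → 𝕜) :
    cfc g x = ∑ c ∈ hx.toFinset, g c • spectralProj x c := by
  classical
  simp_rw [spectralProj, ← cfc_const_mul _ _ x (hx.continuousOn _)]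
  rw [← cfc_sum _ x _ fun _ _ => hx.continuousOn _]
  refine cfc_congr fun t ht => ?_
  simp [Finset.sum_apply, Pi.single_apply, ht]

theorem sum_spectralProj {x : A} (hpx : p x) (hx : (spectrum 𝕜 x).Finite) :
    ∑ c ∈ hx.toFinset, spectralProj x c = 1 := by
  simpa only [cfc_const_one 𝕜 x hpx, one_smul] using
    (cfc_eq_sum_smul_spectralProj hx fun _ => (1 : 𝕜)).symm

theorem sub_algebraMap_mul_cfc_dslope {g : 𝕜 → 𝕜} {c : 𝕜} {y : A} (hpy : p y)
    (hg : ContinuousOn g (spectrum 𝕜 y)) (hgc : ContinuousOn (dslope g c) (spectrum 𝕜 y)) :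
    (y - algebraMap 𝕜 A c) * cfc (dslope g c) y = cfc g y - algebraMap 𝕜 A (g c) := by
  rw [← cfc_const (g c) y hpy, ← cfc_sub _ _ y, ← cfc_const c y hpy]
  nth_rw 1 [← cfc_id' 𝕜 y hpy]
  rw [← cfc_sub _ _ y, ← cfc_mul _ _ y]
  exact cfc_congr fun t _ => sub_smul_dslope g c t

theorem cfc_sub_cfc_eq_sum {g : 𝕜 → 𝕜} {x y : A} (hpx : p x) (hx : (spectrum 𝕜 x).Finite)
    (hpy : p y) (hg : ContinuousOn g (spectrum 𝕜 y))
    (hgx : ∀ c ∈ spectrum 𝕜 x, ContinuousOn (dslope g c) (spectrum 𝕜 y)) :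
    cfc g y - cfc g x =
      ∑ c ∈ hx.toFinset, spectralProj x c * (y - x) * cfc (dslope g c) y := by
  have summand (c) (hc : c ∈ spectrum 𝕜 x) :
      spectralProj x c * (y - x) * cfc (dslope g c) y =
        spectralProj x c * cfc g y - g c • spectralProj x c := calc
    _ = spectralProj x c * ((y - algebraMap 𝕜 A c) * cfc (dslope g c) y) := by
      rw [← mul_assoc, mul_sub, mul_sub, spectralProj_mul_self hpx hx, ← Algebra.commutes,
        Algebra.smul_def]
    _ = _ := by
      rw [sub_algebraMap_mul_cfc_dslope hpy hg (hgx c hc), mul_sub, ← Algebra.commutes,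
        Algebra.smul_def]
  rw [Finset.sum_congr rfl fun c hc => summand c (hx.mem_toFinset.1 hc), Finset.sum_sub_distrib,
    ← Finset.sum_mul, sum_spectralProj hpx hx, one_mul, ← cfc_eq_sum_smul_spectralProj]

end FunctionalCalculus

theorem eventually_spectrum_subset {𝕜 A : Type*} [NormedField 𝕜] [ProperSpace 𝕜] [NormedRing A]
    [NormedAlgebra 𝕜 A] [CompleteSpace A] {x : A} {U : Set 𝕜} (hU : U ∈ 𝓝ˢ (spectrum 𝕜 x)) :
    ∀ᶠ y in 𝓝 x, spectrum 𝕜 y ⊆ U :=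
  ((upperHemicontinuous_spectrum 𝕜 A).upperHemicontinuousAt x U hU).mono
    fun _ => subset_of_mem_nhdsSet

section FDeriv

variable {𝕜 A : Type*} {p : A → Prop} [RCLike 𝕜] [NormedRing A] [StarRing A]
  [NormedAlgebra 𝕜 A]

section

variable [ContinuousFunctionalCalculus 𝕜 A p]

/-- The differential at `x` of the function `cfc g`, for `x` with finite spectrum: in an eigenbasis
of `x` it multiplies the `(i, j)` entry by the divided difference of `g` at the `i`-th and `j`-th
eigenvalues. The field `𝕂` over which it is linear need not be the field `𝕜` of the functional
calculus. -/
noncomputable def cfcFDeriv (𝕂 : Type*) [NontriviallyNormedField 𝕂] [NormedAlgebra 𝕂 A]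
    (g : 𝕜 → 𝕜) {x : A} (hx : (spectrum 𝕜 x).Finite) : A →L[𝕂] A :=
  ∑ c ∈ hx.toFinset,
    ContinuousLinearMap.mulLeftRight 𝕂 A (spectralProj x c) (cfc (dslope g c) x)

theorem cfcFDeriv_apply {𝕂 : Type*} [NontriviallyNormedField 𝕂] [NormedAlgebra 𝕂 A]
    (g : 𝕜 → 𝕜) {x : A} (hx : (spectrum 𝕜 x).Finite) (h : A) :
    cfcFDeriv 𝕂 g hx h = ∑ c ∈ hx.toFinset, spectralProj x c * h * cfc (dslope g c) x := by
  simp [cfcFDeriv]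

theorem map_cfcFDeriv_of_map_mul_comm {𝕂 E : Type*} [NontriviallyNormedField 𝕂] [NormedAlgebra 𝕂 A]
    [AddCommGroup E] [Module 𝕜 E] (τ : A →ₗ[𝕜] E) (hτ : ∀ a b, τ (a * b) = τ (b * a))
    (g : 𝕜 → 𝕜) {x : A} (hx : (spectrum 𝕜 x).Finite) (h : A) :
    τ (cfcFDeriv 𝕂 g hx h) = τ (cfc (deriv g) x * h) := by
  rw [cfcFDeriv_apply, cfc_eq_sum_smul_spectralProj hx, Finset.sum_mul, map_sum, map_sum]
  refine Finset.sum_congr rfl fun c _ => ?_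
  rw [hτ, ← mul_assoc, cfc_mul_spectralProj hx, dslope_same]

end

variable [ContinuousStar A] [CompleteSpace A] [IsometricContinuousFunctionalCalculus 𝕜 A p]

theorem continuousWithinAt_cfc {g : 𝕜 → 𝕜} {x : A} (hpx : p x) {U : Set 𝕜}
    (hU : U ∈ 𝓝ˢ (spectrum 𝕜 x)) (hg : ContinuousOn g U) :
    ContinuousWithinAt (cfc g) {y | p y} x := by
  obtain ⟨K, ⟨hKx, hK⟩, hKU⟩ :=
    (spectrum.isCompact (𝕜 := 𝕜) x).nhdsSet_basis_isCompact.mem_iff.1 hU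
  exact continuousWithinAt_id.cfc hK g hpx
    ((eventually_spectrum_subset hKx).filter_mono nhdsWithin_le_nhds)
    self_mem_nhdsWithin (hg.mono hKU)

theorem hasFDerivWithinAt_cfc {g : 𝕜 → 𝕜} {x : A} (hpx : p x) (hx : (spectrum 𝕜 x).Finite)
    {U : Set 𝕜} (hU : U ∈ 𝓝ˢ (spectrum 𝕜 x)) (hg : ContinuousOn g U)
    (hgx : ∀ c ∈ spectrum 𝕜 x, DifferentiableAt 𝕜 g c) :
    HasFDerivWithinAt (cfc g) (cfcFDeriv 𝕜 g hx) {y | p y} x := by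
  have dslope_cont (c) (hc : c ∈ spectrum 𝕜 x) : ContinuousOn (dslope g c) U :=
    (continuousOn_dslope (mem_nhdsSet_iff_forall.1 hU c hc)).2 ⟨hg, hgx c hc⟩
  have remainder : (fun y => ∑ c ∈ hx.toFinset,
      spectralProj x c * (y - x) * (cfc (dslope g c) y - cfc (dslope g c) x))
        =o[𝓝[{y | p y}] x] fun y => y - x := by
    refine .fun_sum fun c hc => ?_
    have vanishes : Tendsto (fun y => cfc (dslope g c) y - cfc (dslope g c) x)
        (𝓝[{y | p y}] x) (𝓝 0) :=
      tendsto_sub_nhds_zero_iff.2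
        (continuousWithinAt_cfc hpx hU (dslope_cont c (hx.mem_toFinset.1 hc)))
    have bounded : (fun y => spectralProj x c * (y - x)) =O[𝓝[{y | p y}] x] fun y => y - x :=
      (ContinuousLinearMap.mul 𝕜 A (spectralProj x c)).isBigO_comp _ _
    simpa using! (bounded.norm_right.mul_isLittleO ((Asymptotics.isLittleO_one_iff ℝ).2 vanishes))
  refine .of_isLittleO (remainder.congr' ?_ .rfl)
  filter_upwards [self_mem_nhdsWithin, nhdsWithin_le_nhds
    (eventually_spectrum_subset hU)] with y hpy hyU
  rw [cfc_sub_cfc_eq_sum hpx hx hpy (hg.mono hyU) fun c hc => (dslope_cont c hc).mono hyU,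
    cfcFDeriv_apply, ← Finset.sum_sub_distrib]
  simp only [mul_sub]

end FDeriv

section Matrix

variable {m : Type*} [Fintype m] [DecidableEq m]

theorem matFun_eq_cfc_s8 (g : ℝ → ℝ) {x : Matrix m m ℂ} (hx : x.IsHermitian) :
    matFun g x = cfc g x := by
  rw [hx.cfc_eq, matFun, dif_pos hx, Matrix.IsHermitian.cfc, Unitary.conjStarAlgAut_apply]
  rfl

theorem IsFDerivMatFun.unique {g : ℝ → ℝ} {x : Matrix m m ℂ} (hx : x.IsHermitian)
    {D E : Matrix m m ℂ →L[ℂ] Matrix m m ℂ} (hD : IsFDerivMatFun g x D)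
    (hE : IsFDerivMatFun g x E) : D = E := by
  have eq_of_isHermitian {h : Matrix m m ℂ} (hh : IsSelfAdjoint h) : D h = E h := by
    refine HasFDerivWithinAt.unique_on hD hE ?_
    have := mem_tangentConeAt_of_segment_subset (x := x) (y := x + h)
      ((selfAdjoint.submodule ℝ (Matrix m m ℂ)).convex.segment_subset hx
        (IsSelfAdjoint.add hx hh))
    simpa using! this
  ext1 h
  rw [← realPart_add_I_smul_imaginaryPart h, map_add, map_add, map_smul, map_smul,
    eq_of_isHermitian (realPart h).2, eq_of_isHermitian (imaginaryPart h).2]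

/-- The Hermitian matrices with spectrum in `U`: the natural domain of `matFun g` for a function `g`
on `U`. -/
def matFunDomain (m : Type*) [Fintype m] [DecidableEq m] (U : Set ℝ) : Set (Matrix m m ℂ) :=
  {x | x.IsHermitian ∧ spectrum ℝ x ⊆ U}

theorem mem_matFunDomain_Ioi_of_posDef {x : Matrix m m ℂ} (hx : x.PosDef) :
    x ∈ matFunDomain m (Set.Ioi 0) := by
  refine ⟨hx.isHermitian, ?_⟩
  rw [hx.isHermitian.spectrum_real_eq_range_eigenvalues]
  exact Set.range_subset_iff.2 hx.eigenvalues_pos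

variable {U : Set ℝ}

section

open scoped Matrix.Norms.L2Operator

theorem isFDerivMatFun_cfcFDeriv {g : ℝ → ℝ} {x : Matrix m m ℂ} (hU : IsOpen U)
    (hx : x ∈ matFunDomain m U) (hg : DifferentiableOn ℝ g U) :
    IsFDerivMatFun g x (cfcFDeriv ℂ g x.finite_real_spectrum) := by
  have cfc_fderiv := hasFDerivWithinAt_cfc hx.1 x.finite_real_spectrum (hU.mem_nhdsSet.2 hx.2)
    hg.continuousOn fun c hc => hg.differentiableAt (hU.mem_nhds (hx.2 hc))
  have restrict_scalars : (cfcFDeriv ℂ g x.finite_real_spectrum).restrictScalars ℝ =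
      cfcFDeriv ℝ g x.finite_real_spectrum := by
    ext1 h
    exact (cfcFDeriv_apply g _ h).trans (cfcFDeriv_apply g _ h).symm
  exact (cfc_fderiv.congr (fun y hy => matFun_eq_cfc_s8 g hy) (matFun_eq_cfc_s8 g hx.1)).congr_fderiv
    restrict_scalars.symm

theorem IsFDerivMatFun.trace_apply {g g' : ℝ → ℝ} {x : Matrix m m ℂ}
    {D : Matrix m m ℂ →L[ℂ] Matrix m m ℂ} (hD : IsFDerivMatFun g x D) (hU : IsOpen U)
    (hx : x ∈ matFunDomain m U) (hg : ∀ t ∈ U, HasDerivAt g (g' t) t)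
    (h : Matrix m m ℂ) : (D h).trace = (matFun g' x * h).trace := by
  rw [hD.unique hx.1 (isFDerivMatFun_cfcFDeriv hU hx
      fun t ht => (hg t ht).differentiableAt.differentiableWithinAt),
    matFun_eq_cfc_s8 g' hx.1, ← cfc_congr fun t ht => (hg t (hx.2 ht)).deriv]
  exact map_cfcFDeriv_of_map_mul_comm (Matrix.traceLinearMap m ℝ ℂ) Matrix.trace_mul_comm g _ h

theorem exists_isFDerivMatFun {g : ℝ → ℝ} {x : Matrix m m ℂ} (hU : IsOpen U)
    (hx : x ∈ matFunDomain m U) (hg : DifferentiableOn ℝ g U) :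
    ∃ D, IsFDerivMatFun g x D :=
  ⟨_, isFDerivMatFun_cfcFDeriv hU hx hg⟩

end

/-- The real bilinear form `(a, h) ↦ Re Tr (a h)`, through which the differential of a trace
function is identified with its gradient matrix. -/
noncomputable def reTraceForm : Matrix m m ℂ →L[ℝ] Matrix m m ℂ →L[ℝ] ℝ :=
  ((LinearMap.mul ℝ (Matrix m m ℂ)).compr₂
    (Complex.reLm ∘ₗ Matrix.traceLinearMap m ℝ ℂ)).toContinuousBilinearMap

theorem reTraceForm_apply (a h : Matrix m m ℂ) : reTraceForm a h = (a * h).trace.re :=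
  rfl

theorem hasFDerivWithinAt_re_trace_matFun {g g' : ℝ → ℝ} {x : Matrix m m ℂ}
    (hU : IsOpen U) (hx : x ∈ matFunDomain m U) (hg : ∀ t ∈ U, HasDerivAt g (g' t) t) :
    HasFDerivWithinAt (fun y => (matFun g y).trace.re) (reTraceForm (matFun g' x))
      {y | y.IsHermitian} x := by
  obtain ⟨D, hD⟩ := exists_isFDerivMatFun hU hx
    fun t ht => (hg t ht).differentiableAt.differentiableWithinAt
  have trace_fderiv := (reTraceForm 1).hasFDerivAt.comp_hasFDerivWithinAt x hD
  simp only [Function.comp_def, reTraceForm_apply, one_mul] at trace_fderiv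
  refine trace_fderiv.congr_fderiv (ContinuousLinearMap.ext fun h => ?_)
  change (1 * D h).trace.re = (matFun g' x * h).trace.re
  rw [one_mul, hD.trace_apply hU hx hg]

variable {E : Type*} [NormedAddCommGroup E] [NormedSpace ℝ E] (L : E →L[ℝ] Matrix m m ℂ)

/-- The map `a ↦ (h ↦ Re Tr (a (L h)))`. It sends `matFun f' (L x)` to the differential at `x`
of `y ↦ Re Tr (matFun f (L y))`. -/
noncomputable def reTraceFormComp : Matrix m m ℂ →L[ℝ] E →L[ℝ] ℝ :=
  (ContinuousLinearMap.precomp ℝ L) ∘L reTraceForm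

variable {L} {s : Set E} {x : E}

theorem hasFDerivWithinAt_re_trace_matFun_comp {f f' : ℝ → ℝ}
    (hU : IsOpen U) (hL : Set.MapsTo L s (matFunDomain m U)) (hx : x ∈ s)
    (hf : ∀ t ∈ U, HasDerivAt f (f' t) t) :
    HasFDerivWithinAt (fun y => (matFun f (L y)).trace.re)
      (reTraceFormComp L (matFun f' (L x))) s x :=
  (hasFDerivWithinAt_re_trace_matFun hU (hL hx) hf).comp x L.hasFDerivWithinAt fun _ hy => (hL hy).1

theorem IsFDerivMatFun.hasFDerivWithinAt_reTraceFormComp {g : ℝ → ℝ}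
    {D : Matrix m m ℂ →L[ℂ] Matrix m m ℂ} (hD : IsFDerivMatFun g (L x) D)
    (hL : Set.MapsTo L s {y | y.IsHermitian}) :
    HasFDerivWithinAt (fun y => reTraceFormComp L (matFun g (L y)))
      (reTraceFormComp L ∘L D.restrictScalars ℝ ∘L L) s x :=
  (reTraceFormComp L).hasFDerivAt.comp_hasFDerivWithinAt x
    (HasFDerivWithinAt.comp x hD L.hasFDerivWithinAt hL)

end Matrix

section PartialTrace

variable {ι₁ ι₂ : Type*} [Fintype ι₂]

theorem posDef_ptrace [Nonempty ι₂] {ρ : Matrix (ι₁ × ι₂) (ι₁ × ι₂) ℂ} (hρ : ρ.PosDef) :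
    (ptrace ρ).PosDef := by
  have sum_blocks : ptrace ρ = ∑ k : ι₂, ρ.submatrix (fun i => (i, k)) (fun i => (i, k)) := by
    ext i j
    simp [ptrace, Matrix.sum_apply]
  rw [sum_blocks]
  exact Matrix.posDef_sum Finset.univ_nonempty fun k _ => hρ.submatrix (Prod.mk_left_injective k)

/-- The partial trace as a continuous linear map. -/
noncomputable def ptraceCLM [Fintype ι₁] :
    Matrix (ι₁ × ι₂) (ι₁ × ι₂) ℂ →L[ℂ] Matrix ι₁ ι₁ ℂ :=
  LinearMap.toContinuousLinearMap
    { toFun := ptrace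
      map_add' := fun ρ σ => by ext; simp [ptrace, Finset.sum_add_distrib]
      map_smul' := fun c ρ => by ext; simp [ptrace, Finset.mul_sum] }

end PartialTrace

theorem differentiableOn_of_contDiffOn_two {f f' : ℝ → ℝ} {U : Set ℝ} (hU : IsOpen U)
    (hf : ContDiffOn ℝ 2 f U) (hf' : ∀ t ∈ U, HasDerivAt f (f' t) t) : DifferentiableOn ℝ f' U :=
  ((hf.deriv_of_isOpen (m := 1) hU one_add_one_eq_two.le).differentiableOn one_ne_zero).congr
    fun t ht => (hf' t ht).deriv.symm

theorem second_fderiv_of_G_general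
    {ι₁ ι₂ : Type*} [Fintype ι₁] [DecidableEq ι₁] [Fintype ι₂] [DecidableEq ι₂]
    (f f' : ℝ → ℝ)
    (hf' : ∀ t ∈ Set.Ioi (0 : ℝ), HasDerivAt f (f' t) t)
    (hdf' : DifferentiableOn ℝ f' (Set.Ioi 0))
    (d₂ : ℕ) (hd₂ : d₂ = Fintype.card ι₂)
    (G : Matrix (ι₁ × ι₂) (ι₁ × ι₂) ℂ → ℝ)
    (hG : ∀ ρ, G ρ = (d₂ : ℝ)⁻¹ * (Matrix.trace (matFun f ((d₂ : ℂ) • ρ))).re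
        - (Matrix.trace (matFun f (ptrace ρ))).re) :
    ∃ G' : Matrix (ι₁ × ι₂) (ι₁ × ι₂) ℂ → (Matrix (ι₁ × ι₂) (ι₁ × ι₂) ℂ →L[ℝ] ℝ),
      (∀ σ : Matrix (ι₁ × ι₂) (ι₁ × ι₂) ℂ, σ.PosDef →
        HasFDerivWithinAt G (G' σ) {τ : Matrix (ι₁ × ι₂) (ι₁ × ι₂) ℂ | τ.PosDef} σ) ∧
      ∀ ρ : Matrix (ι₁ × ι₂) (ι₁ × ι₂) ℂ, ρ.PosDef →
        ∃ G'' : Matrix (ι₁ × ι₂) (ι₁ × ι₂) ℂ →L[ℝ]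
            (Matrix (ι₁ × ι₂) (ι₁ × ι₂) ℂ →L[ℝ] ℝ),
          HasFDerivWithinAt G' G'' {τ : Matrix (ι₁ × ι₂) (ι₁ × ι₂) ℂ | τ.PosDef} ρ ∧
          ∀ (h : Matrix (ι₁ × ι₂) (ι₁ × ι₂) ℂ)
            (D : Matrix (ι₁ × ι₂) (ι₁ × ι₂) ℂ →L[ℂ] Matrix (ι₁ × ι₂) (ι₁ × ι₂) ℂ)
            (D₁ : Matrix ι₁ ι₁ ℂ →L[ℂ] Matrix ι₁ ι₁ ℂ),
            IsFDerivMatFun f' ((d₂ : ℂ) • ρ) D → IsFDerivMatFun f' (ptrace ρ) D₁ →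
            G'' h h = (d₂ : ℝ) * (Matrix.trace (h * D h)).re
              - (Matrix.trace (ptrace h * D₁ (ptrace h))).re := by
  obtain _ | _ := isEmpty_or_nonempty ι₂
  · have ptrace_eq_zero (h : Matrix (ι₁ × ι₂) (ι₁ × ι₂) ℂ) : ptrace h = 0 := by
      ext
      simp [ptrace]
    refine ⟨0, fun σ _ => hasFDerivWithinAt_of_subsingleton _ _ _, fun ρ _ =>
      ⟨0, hasFDerivWithinAt_of_subsingleton _ _ _, fun h D D₁ _ _ => ?_⟩⟩
    simp [ptrace_eq_zero, hd₂]
  have hd₂_pos : 0 < d₂ := hd₂ ▸ Fintype.card_pos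
  let L : Matrix (ι₁ × ι₂) (ι₁ × ι₂) ℂ →L[ℝ] Matrix (ι₁ × ι₂) (ι₁ × ι₂) ℂ :=
    ((d₂ : ℂ) • ContinuousLinearMap.id ℂ _).restrictScalars ℝ
  let L₁ : Matrix (ι₁ × ι₂) (ι₁ × ι₂) ℂ →L[ℝ] Matrix ι₁ ι₁ ℂ := ptraceCLM.restrictScalars ℝ
  have mapsTo_L : Set.MapsTo L {σ | σ.PosDef} (matFunDomain (ι₁ × ι₂) (Set.Ioi 0)) :=
    fun σ (hσ : σ.PosDef) => mem_matFunDomain_Ioi_of_posDef (hσ.smul (a := (d₂ : ℂ))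
      (by exact_mod_cast hd₂_pos))
  have mapsTo_L₁ : Set.MapsTo L₁ {σ | σ.PosDef} (matFunDomain ι₁ (Set.Ioi 0)) :=
    fun σ (hσ : σ.PosDef) => mem_matFunDomain_Ioi_of_posDef (posDef_ptrace hσ)
  refine ⟨fun σ => (d₂ : ℝ)⁻¹ • reTraceFormComp L (matFun f' (L σ)) -
    reTraceFormComp L₁ (matFun f' (L₁ σ)), fun σ hσ => ?_, fun ρ hρ => ?_⟩
  · have G_eq : G = fun τ => (d₂ : ℝ)⁻¹ * (matFun f (L τ)).trace.re -
        (matFun f (L₁ τ)).trace.re := funext hG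
    rw [G_eq]
    exact ((hasFDerivWithinAt_re_trace_matFun_comp isOpen_Ioi mapsTo_L hσ hf').fun_const_smul
      (d₂ : ℝ)⁻¹).fun_sub (hasFDerivWithinAt_re_trace_matFun_comp isOpen_Ioi mapsTo_L₁ hσ hf')
  · obtain ⟨E, hE⟩ := exists_isFDerivMatFun isOpen_Ioi (mapsTo_L hρ) hdf'
    obtain ⟨E₁, hE₁⟩ := exists_isFDerivMatFun isOpen_Ioi (mapsTo_L₁ hρ) hdf'
    have fderiv_L := hE.hasFDerivWithinAt_reTraceFormComp fun σ hσ => (mapsTo_L hσ).1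
    have fderiv_L₁ := hE₁.hasFDerivWithinAt_reTraceFormComp fun σ hσ => (mapsTo_L₁ hσ).1
    refine ⟨_, (fderiv_L.fun_const_smul (d₂ : ℝ)⁻¹).fun_sub fderiv_L₁, fun h D D₁ hD hD₁ => ?_⟩
    obtain rfl := hD.unique (mapsTo_L hρ).1 hE
    obtain rfl := hD₁.unique (mapsTo_L₁ hρ).1 hE₁
    have scalar_part : (d₂ : ℝ)⁻¹ * (D ((d₂ : ℂ) • h) * ((d₂ : ℂ) • h)).trace.re =
        d₂ * (h * D h).trace.re := by
      simp [Matrix.trace_mul_comm h, hd₂_pos.ne']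
    change (d₂ : ℝ)⁻¹ * (D ((d₂ : ℂ) • h) * ((d₂ : ℂ) • h)).trace.re -
      (D₁ (ptrace h) * ptrace h).trace.re = _
    rw [scalar_part, Matrix.trace_mul_comm (ptrace h)]

/-- For twice continuously differentiable `f : (0,∞) → ℝ`, the function
`G(ρ) = d₂⁻¹ · Tr₁₂ f(d₂ρ) − Tr₁ f(ρ₁)` is twice Fréchet differentiable on positive definite
operators on `H = H₁ ⊗ H₂`, and its second Fréchet differential satisfies
`d²G(ρ)(h,h) = d₂ · Tr₁₂ (h ⬝ Df'(d₂ρ) h) − Tr₁ (h₁ ⬝ Df'(ρ₁) h₁)`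
for positive definite `ρ` and self-adjoint `h`, where `ρ₁ = Tr₂ ρ`, `h₁ = Tr₂ h` and
`d₂ = dim H₂`. -/
theorem second_fderiv_of_G
    {ι₁ ι₂ : Type*} [Fintype ι₁] [DecidableEq ι₁] [Fintype ι₂] [DecidableEq ι₂]
    (f f' : ℝ → ℝ)
    (hf : ContDiffOn ℝ 2 f (Set.Ioi 0))
    (hf' : ∀ t ∈ Set.Ioi (0 : ℝ), HasDerivAt f (f' t) t)
    (d₂ : ℕ) (hd₂ : d₂ = Fintype.card ι₂)
    (G : Matrix (ι₁ × ι₂) (ι₁ × ι₂) ℂ → ℝ)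
    (hG : ∀ ρ, G ρ = (d₂ : ℝ)⁻¹ * (Matrix.trace (matFun f ((d₂ : ℂ) • ρ))).re
        - (Matrix.trace (matFun f (ptrace ρ))).re) :
    ∃ G' : Matrix (ι₁ × ι₂) (ι₁ × ι₂) ℂ → (Matrix (ι₁ × ι₂) (ι₁ × ι₂) ℂ →L[ℝ] ℝ),
      (∀ σ : Matrix (ι₁ × ι₂) (ι₁ × ι₂) ℂ, σ.PosDef →
        HasFDerivWithinAt G (G' σ) {τ : Matrix (ι₁ × ι₂) (ι₁ × ι₂) ℂ | τ.PosDef} σ) ∧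
      ∀ ρ : Matrix (ι₁ × ι₂) (ι₁ × ι₂) ℂ, ρ.PosDef →
        ∃ G'' : Matrix (ι₁ × ι₂) (ι₁ × ι₂) ℂ →L[ℝ]
            (Matrix (ι₁ × ι₂) (ι₁ × ι₂) ℂ →L[ℝ] ℝ),
          HasFDerivWithinAt G' G'' {τ : Matrix (ι₁ × ι₂) (ι₁ × ι₂) ℂ | τ.PosDef} ρ ∧
          ∀ h : Matrix (ι₁ × ι₂) (ι₁ × ι₂) ℂ, h.IsHermitian →
            ∀ (D : Matrix (ι₁ × ι₂) (ι₁ × ι₂) ℂ →L[ℂ] Matrix (ι₁ × ι₂) (ι₁ × ι₂) ℂ)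
              (D₁ : Matrix ι₁ ι₁ ℂ →L[ℂ] Matrix ι₁ ι₁ ℂ),
              IsFDerivMatFun f' ((d₂ : ℂ) • ρ) D → IsFDerivMatFun f' (ptrace ρ) D₁ →
              G'' h h = (d₂ : ℝ) * (Matrix.trace (h * D h)).re
                - (Matrix.trace (ptrace h * D₁ (ptrace h))).re := by
  obtain ⟨G', hG', hG''⟩ := second_fderiv_of_G_general f f' hf'
    (differentiableOn_of_contDiffOn_two isOpen_Ioi hf hf') d₂ hd₂ G hG
  exact ⟨G', hG', fun ρ hρ => (hG'' ρ hρ).imp fun _ => And.imp_right fun formula h _ => formula h⟩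
end
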